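/- arXiv:1706.08550 — 4 statements merged into one kernel-verified Lean document; each statement's English description precedes it below -/
import Mathlib

section
/- Let A be an n×n real matrix with entries in [0,1] and consider the symmetric game (A, A^T). Let M' be an SDP2-feasible solution for the game (A, A^T) that additionally satisfies the symmetry constraints x = y and X = P = Y, and suppose the upper-left 2n×2n block M of M' has rank 2. Then there exists z ∈ Δ_n such that (z,z) is a symmetric 1/3-Nash equilibrium of (A, A^T), i.e., ε(z,z) ≤ 1/3. -/
open Matrix BigOperators

/-- Index type for the `(m+n+1)×(m+n+1)` SDP matrix: `m` row-player strategies,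
`n` column-player strategies, plus one extra index for the last row/column. -/
abbrev SDPIdx (m n : ℕ) := (Fin m ⊕ Fin n) ⊕ Unit

variable {m n : ℕ}

/-- The vector `x` appearing in the last column of the SDP matrix. -/
def lastX (M : Matrix (SDPIdx m n) (SDPIdx m n) ℝ) (i : Fin m) : ℝ :=
  M (Sum.inl (Sum.inl i)) (Sum.inr ())

/-- The vector `y` appearing in the last column of the SDP matrix. -/
def lastY (M : Matrix (SDPIdx m n) (SDPIdx m n) ℝ) (j : Fin n) : ℝ :=
  M (Sum.inl (Sum.inr j)) (Sum.inr ())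

/-- The `m × m` block `X`. -/
def blkX (M : Matrix (SDPIdx m n) (SDPIdx m n) ℝ) (i i' : Fin m) : ℝ :=
  M (Sum.inl (Sum.inl i)) (Sum.inl (Sum.inl i'))

/-- The `n × n` block `Y`. -/
def blkY (M : Matrix (SDPIdx m n) (SDPIdx m n) ℝ) (j j' : Fin n) : ℝ :=
  M (Sum.inl (Sum.inr j)) (Sum.inl (Sum.inr j'))

/-- The `m × n` block `P = Zᵀ`. -/
def blkP (M : Matrix (SDPIdx m n) (SDPIdx m n) ℝ) (i : Fin m) (j : Fin n) : ℝ :=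
  M (Sum.inl (Sum.inl i)) (Sum.inl (Sum.inr j))

/-- The `n × m` block `Z`. -/
def blkZ (M : Matrix (SDPIdx m n) (SDPIdx m n) ℝ) (j : Fin n) (i : Fin m) : ℝ :=
  M (Sum.inl (Sum.inr j)) (Sum.inl (Sum.inl i))

/-- The upper-left `(m+n)×(m+n)` block `M = [[X, P],[Z, Y]]` of the SDP matrix. -/
def upperBlock (M : Matrix (SDPIdx m n) (SDPIdx m n) ℝ) :
    Matrix (Fin m ⊕ Fin n) (Fin m ⊕ Fin n) ℝ :=
  Matrix.of fun a b => M (Sum.inl a) (Sum.inl b)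

/-- Membership in the standard simplex `Δ_k`. -/
def InSimplex {k : ℕ} (x : Fin k → ℝ) : Prop :=
  (∀ i, 0 ≤ x i) ∧ ∑ i, x i = 1

/-- `(x,y)` is a Nash equilibrium of the bimatrix game `(A,B)`:
`x ∈ Δ_m`, `y ∈ Δ_n`, `xᵀAy ≥ (Ay)_i` for all `i`, and `xᵀBy ≥ (Bᵀx)_j` for all `j`. -/
def IsNash (A B : Matrix (Fin m) (Fin n) ℝ) (x : Fin m → ℝ) (y : Fin n → ℝ) : Prop :=
  InSimplex x ∧ InSimplex y ∧
  (∀ i : Fin m, ∑ i', ∑ j, x i' * A i' j * y j ≥ ∑ j, A i j * y j) ∧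
  (∀ j : Fin n, ∑ i, ∑ j', x i * B i j' * y j' ≥ ∑ i, B i j * x i)

/-- Feasibility for SDP1: `M'` is psd, entrywise nonnegative, has `1` in the corner,
`x` and `y` sum to one, and the relaxed Nash constraints
`Tr(AZ) ≥ (Ay)_i` and `Tr(BZ) ≥ (Bᵀx)_j` hold. -/
def SDP1Feasible (A B : Matrix (Fin m) (Fin n) ℝ)
    (M : Matrix (SDPIdx m n) (SDPIdx m n) ℝ) : Prop :=
  M.PosSemidef ∧
  (∀ a b, 0 ≤ M a b) ∧
  M (Sum.inr ()) (Sum.inr ()) = 1 ∧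
  (∑ i, lastX M i) = 1 ∧
  (∑ j, lastY M j) = 1 ∧
  (∀ i : Fin m, ∑ i', ∑ j, A i' j * blkZ M j i' ≥ ∑ j, A i j * lastY M j) ∧
  (∀ j : Fin n, ∑ i, ∑ j', B i j' * blkZ M j' i ≥ ∑ i, B i j * lastX M i)

/-- Feasibility for SDP2: SDP1 feasibility together with the row constraints and the
correlated equilibrium constraints. -/
def SDP2Feasible (A B : Matrix (Fin m) (Fin n) ℝ)
    (M : Matrix (SDPIdx m n) (SDPIdx m n) ℝ) : Prop :=
  SDP1Feasible A B M ∧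
  (∀ i : Fin m, ∑ j, blkX M i j = lastX M i) ∧
  (∀ i : Fin m, ∑ j, blkP M i j = lastX M i) ∧
  (∀ j : Fin n, ∑ j', blkY M j j' = lastY M j) ∧
  (∀ j : Fin n, ∑ i, blkZ M j i = lastY M j) ∧
  (∀ i k : Fin m, ∑ j, A i j * blkP M i j ≥ ∑ j, A k j * blkP M i j) ∧
  (∀ j k : Fin n, ∑ i, B i j * blkP M i j ≥ ∑ i, B i k * blkP M i j)

/-- `ε_A(x,y) = max_i (Ay)_i − xᵀAy`. -/
noncomputable def epsA (A : Matrix (Fin m) (Fin n) ℝ) (x : Fin m → ℝ) (y : Fin n → ℝ) : ℝ :=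
  (⨆ i : Fin m, ∑ j, A i j * y j) - ∑ i, ∑ j, x i * A i j * y j

/-- `ε_B(x,y) = max_j (Bᵀx)_j − xᵀBy`. -/
noncomputable def epsB (B : Matrix (Fin m) (Fin n) ℝ) (x : Fin m → ℝ) (y : Fin n → ℝ) : ℝ :=
  (⨆ j : Fin n, ∑ i, B i j * x i) - ∑ i, ∑ j, x i * B i j * y j

/-- `ε(x,y) = max{ε_A(x,y), ε_B(x,y)}`. -/
noncomputable def epsNE (A B : Matrix (Fin m) (Fin n) ℝ) (x : Fin m → ℝ) (y : Fin n → ℝ) : ℝ :=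
  max (epsA A x y) (epsB B x y)

/-- The `m × n` all-ones matrix `J`. -/
def allOnesM (m n : ℕ) : Matrix (Fin m) (Fin n) ℝ :=
  Matrix.of fun _ _ => (1 : ℝ)

/-!
A nonnegative positive semidefinite `X` of rank at most `2` is the Gram matrix of plane vectors
that are pairwise at angle at most `π / 2`. They can be rotated into the first quadrant, and
reading off coordinates gives `X = B Bᵀ` with `B ≥ 0`.

Let `v_c` be the columns of `B`, and put `α_c = ∑ i, B i c` and `G = Bᵀ A B`. The solution then
reads `x = ∑ c, α_c v_c`, with `∑ c, α_c² = 1` and `Tr (A X) = ∑ c, G_cc`. If some `G_cc` exceeds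
`(2/3) α_c²`, the strategy `v_c / α_c` earns at least `2/3` against itself, and no strategy earns
more than `1`. Otherwise `x` works: since `xᵀ A x = αᵀ G α ≥ ∑ c, α_c² G_cc`, its regret is at most
`∑ c, (1 - α_c²) G_cc ≤ (2/3) ∑ c, α_c² (1 - α_c²) ≤ (2/3) (1 - 1/2) = 1/3`.

With `k` columns instead of `2`, the two cases balance when `(1 - ε) (1 - 1/k) = ε`, that is, at
`ε = (k - 1) / (2k - 1)`.
-/

section Quadrant

theorem re_star_mul (z w : ℂ) : (star z * w).re = z.re * w.re + z.im * w.im := by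
  simp [Complex.mul_re]

theorem im_star_mul_nonneg_trans {a b c : ℂ} (hb : b ≠ 0)
    (hab : 0 ≤ (star a * b).re) (hbc : 0 ≤ (star b * c).re)
    (hab' : 0 ≤ (star a * b).im) (hbc' : 0 ≤ (star b * c).im) : 0 ≤ (star a * c).im := by
  have hmul : (star a * b) * (star b * c) = (Complex.normSq b : ℂ) * (star a * c) := by
    rw [Complex.normSq_eq_conj_mul_self, starRingEnd_apply]; ring
  have him : Complex.normSq b * (star a * c).im = ((star a * b) * (star b * c)).im := by
    rw [hmul, Complex.im_ofReal_mul]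
  refine nonneg_of_mul_nonneg_right ?_ (Complex.normSq_pos.2 hb)
  rw [him, Complex.mul_im]
  positivity

variable {ι : Type*} [Finite ι] {w : ι → ℂ}

theorem exists_forall_im_star_mul_nonneg [Nonempty ι] (hw : ∀ i, w i ≠ 0)
    (hre : ∀ i j, 0 ≤ (star (w i) * w j).re) : ∃ j, ∀ i, 0 ≤ (star (w j) * w i).im := by
  let r : ι → ι → Prop := fun i j => 0 ≤ (star (w j) * w i).im
  have : IsTrans ι r := ⟨fun i j k hij hjk =>
    im_star_mul_nonneg_trans (hw j) (hre k j) (hre j i) hjk hij⟩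
  have : Std.Total r := ⟨fun i j => by
    have hneg : (star (w i) * w j).im = -(star (w j) * w i).im := by
      simp only [Complex.mul_im, Complex.star_def, Complex.conj_re, Complex.conj_im]
      ring
    simpa only [r, hneg, Left.nonneg_neg_iff] using le_total 0 _⟩
  exact (Std.Total.directed (r := r) (id : ι → ι)).finite_le id

theorem exists_norm_eq_one_forall_mul_mem_quadrant (hre : ∀ i j, 0 ≤ (star (w i) * w j).re) :
    ∃ u : ℂ, ‖u‖ = 1 ∧ ∀ i, 0 ≤ (u * w i).re ∧ 0 ≤ (u * w i).im := by
  rcases isEmpty_or_nonempty {i // w i ≠ 0} with h | h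
  · refine ⟨1, norm_one, fun i => ?_⟩
    simp [show w i = 0 from by_contra fun hi => h.false ⟨i, hi⟩]
  obtain ⟨⟨j, hj⟩, him⟩ := exists_forall_im_star_mul_nonneg (w := fun i : {i // w i ≠ 0} => w i)
    (fun i => i.2) (fun i j => hre i j)
  have smul (z : ℂ) : star (w j) / ‖w j‖ * z = ((‖w j‖⁻¹ : ℝ) : ℂ) * (star (w j) * z) := by
    push_cast; ring
  refine ⟨star (w j) / ‖w j‖, by simp [hj], fun i => ?_⟩
  have him' : 0 ≤ (star (w j) * w i).im := by
    by_cases hi : w i = 0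
    · simp [hi]
    · exact him ⟨i, hi⟩
  rw [smul, Complex.re_ofReal_mul, Complex.im_ofReal_mul]
  exact ⟨mul_nonneg (by positivity) (hre j i), mul_nonneg (by positivity) him'⟩

end Quadrant

section Matrices

variable {ι κ : Type*} [Fintype ι]

theorem isHermitian_apply_eq_sum_eigenvalues {𝕜 : Type*} [RCLike 𝕜] [DecidableEq ι]
    {X : Matrix ι ι 𝕜} (hX : X.IsHermitian) (i j : ι) :
    X i j = ∑ l, (hX.eigenvalues l : 𝕜) *
      (hX.eigenvectorUnitary.1 i l * star (hX.eigenvectorUnitary.1 j l)) := by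
  conv_lhs => rw [hX.spectral_theorem, Unitary.conjStarAlgAut_apply]
  rw [Matrix.mul_apply]
  refine Finset.sum_congr rfl fun l _ => ?_
  rw [Matrix.mul_diagonal, Matrix.star_apply, Function.comp_apply]
  ring

open scoped ComplexOrder in
theorem exists_eq_mul_conjTranspose_of_rank_le_card {𝕜 : Type*} [RCLike 𝕜] [Fintype κ]
    {X : Matrix ι ι 𝕜} (hX : X.PosSemidef) (hrank : X.rank ≤ Fintype.card κ) :
    ∃ B : Matrix ι κ 𝕜, X = B * Bᴴ := by
  classical
  let lam : ι → ℝ := hX.isHermitian.eigenvalues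
  let U : Matrix ι ι 𝕜 := hX.isHermitian.eigenvectorUnitary.1
  rw [hX.isHermitian.rank_eq_card_non_zero_eigs] at hrank
  obtain ⟨f⟩ : Nonempty ({l // lam l ≠ 0} ↪ κ) := Function.Embedding.nonempty_of_card_le hrank
  let B : Matrix ι κ 𝕜 := .of fun i => Function.extend f (fun l => (√(lam l) : 𝕜) * U i l) 0
  have mul_star_B (i j : ι) (l : {l // lam l ≠ 0}) :
      (lam l : 𝕜) * (U i l * star (U j l)) = B i (f l) * Bᴴ (f l) j := by
    have hsqrt : (√(lam l) : 𝕜) * √(lam l) = lam l := by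
      rw [← RCLike.ofReal_mul, Real.mul_self_sqrt (hX.eigenvalues_nonneg l)]
    simp only [B, Matrix.conjTranspose_apply, Matrix.of_apply, f.injective.extend_apply,
      star_mul', RCLike.star_def, RCLike.conj_ofReal]
    linear_combination -(U i l * starRingEnd 𝕜 (U j l)) * hsqrt
  refine ⟨B, Matrix.ext fun i j => ?_⟩
  calc X i j = ∑ l, (lam l : 𝕜) * (U i l * star (U j l)) :=
        isHermitian_apply_eq_sum_eigenvalues hX.isHermitian i j
    _ = ∑ l : {l // lam l ≠ 0}, (lam l : 𝕜) * (U i l * star (U j l)) :=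
        (Fintype.sum_of_injective Subtype.val Subtype.val_injective _ _ (fun l hl => by
          have : lam l = 0 := by simpa using hl
          simp [this]) fun _ => rfl).symm
    _ = ∑ c, B i c * Bᴴ c j :=
        Fintype.sum_of_injective f f.injective _ _ (fun c hc => by
          simp [B, Function.extend_apply' _ _ _ hc]) (mul_star_B i j)
    _ = (B * Bᴴ) i j := (Matrix.mul_apply ..).symm

theorem exists_nonneg_eq_mul_transpose_of_rank_le_two {X : Matrix ι ι ℝ} (hX : X.PosSemidef)
    (hrank : X.rank ≤ 2) (hnonneg : ∀ i j, 0 ≤ X i j) :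
    ∃ B : Matrix ι (Fin 2) ℝ, (∀ i c, 0 ≤ B i c) ∧ X = B * Bᵀ := by
  obtain ⟨C, hC⟩ :=
    exists_eq_mul_conjTranspose_of_rank_le_card (κ := Fin 2) hX (by simpa using hrank)
  let w : ι → ℂ := fun i => ⟨C i 0, C i 1⟩
  have hXw (i j : ι) : X i j = (star (w i) * w j).re := by
    rw [re_star_mul]
    simp [hC, w, Matrix.mul_apply, Fin.sum_univ_two]
  obtain ⟨u, hu, hquad⟩ :=
    exists_norm_eq_one_forall_mul_mem_quadrant (w := w) fun i j => hXw i j ▸ hnonneg i j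
  refine ⟨.of fun i => ![(u * w i).re, (u * w i).im],
    fun i => Fin.forall_fin_two.2 (hquad i), Matrix.ext fun i j => ?_⟩
  have hrot : star (u * w i) * (u * w j) = star (w i) * w j := by
    have huu : star u * u = 1 := by simp [Complex.conj_mul', hu]
    rw [star_mul']
    linear_combination star (w i) * w j * huu
  rw [hXw, ← hrot, re_star_mul]
  simp [Matrix.mul_apply, Fin.sum_univ_two]

theorem sum_mul_one_sub_le {t : ι → ℝ} (ht : ∑ i, t i = 1) :
    ∑ i, t i * (1 - t i) ≤ 1 - 1 / Fintype.card ι := by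
  have hcs : (∑ i, t i) ^ 2 ≤ Fintype.card ι * ∑ i, t i ^ 2 := sq_sum_le_card_mul_sum_sq
  have hcard : 1 / (Fintype.card ι : ℝ) ≤ ∑ i, t i ^ 2 := by
    rw [ht, one_pow] at hcs
    exact div_le_of_le_mul₀ (by positivity) (Finset.sum_nonneg fun i _ => sq_nonneg _) (by linarith)
  simp only [mul_sub, mul_one, Finset.sum_sub_distrib, ht, ← sq]
  linarith

theorem sum_one_sub_mul_le {t V : ι → ℝ} (ht : t ∈ stdSimplex ℝ ι) {a : ℝ} (ha : 0 ≤ a)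
    (hV : ∀ i, V i ≤ a * t i) : ∑ i, (1 - t i) * V i ≤ a * (1 - 1 / Fintype.card ι) :=
  calc ∑ i, (1 - t i) * V i
      ≤ ∑ i, (1 - t i) * (a * t i) := Finset.sum_le_sum fun i _ =>
        mul_le_mul_of_nonneg_left (hV i) (sub_nonneg.2 (mem_Icc_of_mem_stdSimplex ht i).2)
    _ = a * ∑ i, t i * (1 - t i) := by
        rw [Finset.mul_sum]
        exact Finset.sum_congr rfl fun i _ => by ring
    _ ≤ a * (1 - 1 / Fintype.card ι) :=
        mul_le_mul_of_nonneg_left (sum_mul_one_sub_le ht.2) ha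

theorem sum_sq_mul_diag_le_dotProduct_mulVec {G : Matrix ι ι ℝ} (hG : ∀ i j, 0 ≤ G i j)
    {u : ι → ℝ} (hu : ∀ i, 0 ≤ u i) : ∑ i, u i ^ 2 * G i i ≤ u ⬝ᵥ G *ᵥ u := by
  refine Finset.sum_le_sum fun i _ => ?_
  have hdiag : G i i * u i ≤ (G *ᵥ u) i :=
    Finset.single_le_sum (f := fun j => G i j * u j) (fun j _ => mul_nonneg (hG i j) (hu j))
      (Finset.mem_univ i)
  calc u i ^ 2 * G i i = u i * (G i i * u i) := by ring
    _ ≤ u i * (G *ᵥ u) i := mul_le_mul_of_nonneg_left hdiag (hu i)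

end Matrices

section Games

variable {ι κ : Type*} [Fintype ι]

/-- The strategy `z` forms a symmetric `ε`-Nash equilibrium `(z, z)` of the game `(A, Aᵀ)`. By
symmetry of the game, only the row player's regret has to be bounded. -/
def IsSymmApproxNash (A : Matrix ι ι ℝ) (ε : ℝ) (z : ι → ℝ) : Prop :=
  z ∈ stdSimplex ℝ ι ∧ ∀ i, (A *ᵥ z) i ≤ z ⬝ᵥ A *ᵥ z + ε

theorem isSymmApproxNash_of_le_payoff {A : Matrix ι ι ℝ} (hA : ∀ i j, A i j ≤ 1) {ε : ℝ}
    {z : ι → ℝ} (hz : z ∈ stdSimplex ℝ ι) (hpayoff : 1 - ε ≤ z ⬝ᵥ A *ᵥ z) :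
    IsSymmApproxNash A ε z := by
  refine ⟨hz, fun i => ?_⟩
  have hle_one : (A *ᵥ z) i ≤ 1 := by
    rw [← hz.2]
    exact Finset.sum_le_sum fun j _ => mul_le_of_le_one_left (hz.1 j) (hA i j)
  linarith

theorem isSymmApproxNash_inv_sum_smul {A : Matrix ι ι ℝ} (hA : ∀ i j, A i j ≤ 1) {ε : ℝ}
    {v : ι → ℝ} (hv : ∀ i, 0 ≤ v i) (hpayoff : (1 - ε) * (∑ i, v i) ^ 2 < v ⬝ᵥ A *ᵥ v) :
    IsSymmApproxNash A ε ((∑ i, v i)⁻¹ • v) := by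
  have hpos : 0 < ∑ i, v i := by
    refine (Finset.sum_nonneg fun i _ => hv i).lt_of_ne' fun hzero => hpayoff.ne ?_
    have hv0 : v = 0 := funext fun i =>
      (Finset.sum_eq_zero_iff_of_nonneg fun i _ => hv i).1 hzero i (Finset.mem_univ i)
    simp [hv0]
  refine isSymmApproxNash_of_le_payoff hA ⟨fun i => ?_, ?_⟩ ?_
  · exact mul_nonneg (inv_nonneg.2 hpos.le) (hv i)
  · simp only [Pi.smul_apply, smul_eq_mul, ← Finset.mul_sum]
    exact inv_mul_cancel₀ hpos.ne'
  · rw [mulVec_smul, smul_dotProduct, dotProduct_smul, smul_eq_mul, smul_eq_mul, ← mul_assoc,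
      ← mul_inv, ← sq, inv_mul_eq_div]
    exact (le_div_iff₀ (pow_pos hpos 2)).2 hpayoff.le

variable [Fintype κ]

theorem sum_mul_transpose_mulVec_one (B : Matrix ι κ ℝ) :
    ∑ i, ((B * Bᵀ) *ᵥ 1) i = ∑ c, (Bᵀ *ᵥ 1) c ^ 2 := by
  rw [← one_dotProduct, ← mulVec_mulVec, dotProduct_mulVec, ← mulVec_transpose]
  exact Finset.sum_congr rfl fun c _ => (sq _).symm

theorem isSymmApproxNash_mul_transpose_mulVec {A : Matrix ι ι ℝ} (hA : ∀ i j, 0 ≤ A i j)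
    {B : Matrix ι κ ℝ} (hB : ∀ i c, 0 ≤ B i c) (hsum : ∑ i, ((B * Bᵀ) *ᵥ 1) i = 1)
    (hnash : ∀ i, (A *ᵥ (B * Bᵀ) *ᵥ 1) i ≤ (A * (B * Bᵀ)).trace)
    {ε : ℝ} (hε : ε ≤ 1) (hcard : (1 - ε) * (1 - 1 / Fintype.card κ) ≤ ε)
    (hdiag : ∀ c, (Bᵀ * A * B) c c ≤ (1 - ε) * (Bᵀ *ᵥ 1) c ^ 2) :
    IsSymmApproxNash A ε ((B * Bᵀ) *ᵥ 1) := by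
  set α : κ → ℝ := Bᵀ *ᵥ 1 with hα
  set G : Matrix κ κ ℝ := Bᵀ * A * B with hG
  set x : ι → ℝ := (B * Bᵀ) *ᵥ 1 with hx
  have hx_eq : x = B *ᵥ α := by rw [hx, hα, mulVec_mulVec]
  have hα_nonneg (c : κ) : 0 ≤ α c :=
    Finset.sum_nonneg fun i _ => mul_nonneg (hB i c) zero_le_one
  have hx_nonneg (i : ι) : 0 ≤ x i :=
    hx_eq ▸ Finset.sum_nonneg fun c _ => mul_nonneg (hB i c) (hα_nonneg c)
  have hG_nonneg (c d : κ) : 0 ≤ G c d :=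
    Finset.sum_nonneg fun j _ => mul_nonneg
      (Finset.sum_nonneg fun i _ => mul_nonneg (hB i c) (hA i j)) (hB j d)
  have hweights : (fun c => α c ^ 2) ∈ stdSimplex ℝ κ :=
    ⟨fun c => sq_nonneg (α c), (sum_mul_transpose_mulVec_one B).symm.trans hsum⟩
  have htrace : (A * (B * Bᵀ)).trace = ∑ c, G c c := by
    rw [← Matrix.mul_assoc, Matrix.trace_mul_comm, ← Matrix.mul_assoc]
    rfl
  have hpayoff : x ⬝ᵥ A *ᵥ x = α ⬝ᵥ G *ᵥ α := by
    rw [hx_eq, hG, ← mulVec_mulVec, ← mulVec_mulVec, dotProduct_mulVec α, vecMul_transpose]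
  refine ⟨⟨hx_nonneg, hsum⟩, fun i => ?_⟩
  calc (A *ᵥ x) i ≤ ∑ c, G c c := htrace ▸ hnash i
    _ = ∑ c, α c ^ 2 * G c c + ∑ c, (1 - α c ^ 2) * G c c := by
        rw [← Finset.sum_add_distrib]
        exact Finset.sum_congr rfl fun c _ => by ring
    _ ≤ x ⬝ᵥ A *ᵥ x + ε :=
        add_le_add (hpayoff ▸ sum_sq_mul_diag_le_dotProduct_mulVec hG_nonneg hα_nonneg)
          ((sum_one_sub_mul_le hweights (sub_nonneg.2 hε) hdiag).trans hcard)

theorem exists_isSymmApproxNash_of_eq_mul_transpose [Nonempty κ] {A : Matrix ι ι ℝ}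
    (hA : ∀ i j, A i j ∈ Set.Icc (0 : ℝ) 1) {X : Matrix ι ι ℝ} {B : Matrix ι κ ℝ}
    (hB : ∀ i c, 0 ≤ B i c) (hX : X = B * Bᵀ) (hsum : ∑ i, (X *ᵥ 1) i = 1)
    (hnash : ∀ i, (A *ᵥ X *ᵥ 1) i ≤ (A * X).trace) :
    ∃ z, IsSymmApproxNash A ((Fintype.card κ - 1) / (2 * Fintype.card κ - 1)) z := by
  subst hX
  set k := (Fintype.card κ : ℝ)
  set ε : ℝ := (k - 1) / (2 * k - 1) with hε
  have hk : 1 ≤ k := Nat.one_le_cast.2 Fintype.card_pos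
  have hden : 0 < 2 * k - 1 := by linarith
  have hε_le : ε ≤ 1 := (div_le_one hden).2 (by linarith)
  have hbalance : (1 - ε) * (1 - 1 / k) = ε := by
    have hone_sub : 1 - ε = k / (2 * k - 1) := by
      rw [hε, eq_div_iff hden.ne', sub_mul, div_mul_cancel₀ _ hden.ne']
      ring
    rw [hone_sub, hε]
    field_simp
  by_cases hcol : ∃ c, (1 - ε) * (Bᵀ *ᵥ 1) c ^ 2 < (Bᵀ * A * B) c c
  · obtain ⟨c, hc⟩ := hcol
    have hmass : (Bᵀ *ᵥ 1) c = ∑ i, Bᵀ c i := dotProduct_one _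
    have hvalue : (Bᵀ * A * B) c c = Bᵀ c ⬝ᵥ A *ᵥ Bᵀ c := by
      rw [Matrix.mul_assoc]
      rfl
    rw [hmass, hvalue] at hc
    exact ⟨_, isSymmApproxNash_inv_sum_smul (fun i j => (hA i j).2) (fun i => hB i c) hc⟩
  · push Not at hcol
    exact ⟨_, isSymmApproxNash_mul_transpose_mulVec (fun i j => (hA i j).1) hB hsum hnash
      hε_le hbalance.le hcol⟩

end Games

theorem epsNE_transpose_self_le {A : Matrix (Fin n) (Fin n) ℝ} {ε : ℝ} {z : Fin n → ℝ}
    (hz : IsSymmApproxNash A ε z) : epsNE A Aᵀ z z ≤ ε := by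
  have : Nonempty (Fin n) := by
    by_contra hempty
    rw [not_nonempty_iff] at hempty
    simpa using hz.1.2
  have hpayoff : z ⬝ᵥ A *ᵥ z = ∑ i, ∑ j, z i * A i j * z j := by
    simp only [dotProduct, mulVec, Finset.mul_sum, mul_assoc]
  have hA : epsA A z z ≤ ε := by
    rw [epsA, ← hpayoff, sub_le_iff_le_add']
    exact ciSup_le hz.2
  have hB : epsB Aᵀ z z = epsA A z z := by
    rw [epsA, epsB, Finset.sum_comm]
    simp only [transpose_apply, mul_comm, mul_left_comm]
  exact max_le hA (hB ▸ hA)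

theorem posSemidef_blkX {M : Matrix (SDPIdx m n) (SDPIdx m n) ℝ} (hM : M.PosSemidef) :
    (Matrix.of (blkX M)).PosSemidef :=
  hM.submatrix (Sum.inl ∘ Sum.inl)

theorem rank_blkX_le (M : Matrix (SDPIdx m n) (SDPIdx m n) ℝ) :
    (Matrix.of (blkX M)).rank ≤ (upperBlock M).rank := by
  change ((upperBlock M).submatrix Sum.inl Sum.inl).rank ≤ _
  exact rank_submatrix_le _ _ _

theorem blkZ_eq_blkX {M : Matrix (SDPIdx n n) (SDPIdx n n) ℝ} (hM : M.IsHermitian)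
    (hXP : ∀ i j, blkX M i j = blkP M i j) (i j : Fin n) : blkZ M i j = blkX M i j :=
  calc blkZ M i j = blkP M j i := hM.apply _ _
    _ = blkX M j i := (hXP j i).symm
    _ = blkX M i j := hM.apply _ _

theorem stmt16_general {n : ℕ} (A : Matrix (Fin n) (Fin n) ℝ)
    (hA : ∀ i j, A i j ∈ Set.Icc (0 : ℝ) 1)
    (M : Matrix (SDPIdx n n) (SDPIdx n n) ℝ)
    (hfeas : SDP1Feasible A Aᵀ M)
    (hrow : ∀ i, ∑ j, blkX M i j = lastX M i)
    (hxy : ∀ i, lastX M i = lastY M i)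
    (hXP : ∀ i j, blkX M i j = blkP M i j)
    (hrank : (upperBlock M).rank ≤ 2) :
    ∃ z : Fin n → ℝ, InSimplex z ∧ epsNE A Aᵀ z z ≤ 1 / 3 := by
  obtain ⟨hpsd, hnonneg, -, hsum, -, hnash, -⟩ := hfeas
  obtain ⟨B, hB, hX⟩ := exists_nonneg_eq_mul_transpose_of_rank_le_two (posSemidef_blkX hpsd)
    ((rank_blkX_le M).trans hrank) fun _ _ => hnonneg _ _
  have hx : Matrix.of (blkX M) *ᵥ 1 = lastX M :=
    funext fun i => (dotProduct_one _).trans (hrow i)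
  have hnash' (i : Fin n) : (A *ᵥ lastX M) i ≤ (A * Matrix.of (blkX M)).trace := by
    have h := hnash i
    simp only [blkZ_eq_blkX hpsd.isHermitian hXP, ← hxy] at h
    exact h
  obtain ⟨z, hz⟩ := exists_isSymmApproxNash_of_eq_mul_transpose hA hB hX
    (by rwa [hx]) (by rwa [hx])
  have hε : ((Fintype.card (Fin 2) : ℝ) - 1) / (2 * Fintype.card (Fin 2) - 1) = 1 / 3 := by
    norm_num
  exact ⟨z, hz.1, epsNE_transpose_self_le (hε ▸ hz)⟩

/-- for a symmetric game `(A, Aᵀ)`, a rank-2 solution of the symmetrized SDP2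
yields a symmetric `1/3`-Nash equilibrium. -/
theorem stmt16 {n : ℕ} (hn : 0 < n) (A : Matrix (Fin n) (Fin n) ℝ)
    (hA : ∀ i j, A i j ∈ Set.Icc (0 : ℝ) 1)
    (M : Matrix (SDPIdx n n) (SDPIdx n n) ℝ)
    (hfeas : SDP2Feasible A Aᵀ M)
    (hxy : ∀ i, lastX M i = lastY M i)
    (hXP : ∀ i j, blkX M i j = blkP M i j)
    (hPY : ∀ i j, blkP M i j = blkY M i j)
    (hrank : (upperBlock M).rank = 2) :
    ∃ z : Fin n → ℝ, InSimplex z ∧ epsNE A Aᵀ z z ≤ 1 / 3 :=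
  stmt16_general A hA M hfeas.1 hfeas.2.1 hxy hXP hrank.le
end

section
/- Let A, B be m×n real matrices such that there exist scalars c > 0, e > 0 and d, f ∈ ℝ with cA + dJ = −eB + fJ (J the m×n all-ones matrix), i.e., the game (A,B) is strictly competitive. Suppose M'* is an SDP2-feasible solution for (A,B) that minimizes the trace of the upper-left (m+n)×(m+n) block among all SDP2-feasible solutions, i.e., Tr(M*) ≤ Tr(M) for every SDP2-feasible solution M' with upper-left block M. Then M'* has rank 1. -/
open Matrix BigOperators

variable {m n : ℕ}

/-! Up to positive scaling the game is constant-sum, so the payoffs `Tr(AZ)` and `Tr(BZ)` and the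
payoffs at `(x, y)` have the same weighted sum. The relaxed Nash constraints say that neither player
earns more at `(x, y)` than under `Z`; hence neither earns less, and `(x, y)` is a Nash equilibrium.
Since `x` and `y` put weight on best responses only, the lift `v vᵀ` with `v = (x, y, 1)` also
satisfies the correlated equilibrium constraints and is feasible. On the other hand, `v` is the last
column of `M` and the corner entry of `M` is `1`, so `M - v vᵀ` is positive semidefinite as a Schur
complement. By minimality its trace is nonpositive, so `M = v vᵀ`. -/

section MatrixLemmas

theorem posSemidef_sub_vecMulVec_col {ι R : Type*} [Finite ι] [CommRing R] [PartialOrder R]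
    [StarRing R] {M : Matrix ι ι R} (hM : M.PosSemidef) {o : ι} (ho : M o o = 1) :
    (M - vecMulVec (M.col o) (star (M.col o))).PosSemidef := by
  classical
  have := Fintype.ofFinite ι
  set v := M.col o
  let e : ι → R := Pi.single o 1
  have hMe : M *ᵥ e = v := mulVec_single_one M o
  have heM : e ᵥ* M = star v := by
    rw [single_one_vecMul]
    exact funext fun a => (hM.isHermitian.apply o a).symm
  have hev : e ⬝ᵥ v = 1 := (single_one_dotProduct o v).trans ho
  have hright : M * (1 - vecMulVec e (star v)) = M - vecMulVec v (star v) := by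
    rw [Matrix.mul_sub, Matrix.mul_one, mul_vecMulVec, hMe]
  have hleft : e ᵥ* (M - vecMulVec v (star v)) = 0 := by
    rw [vecMul_sub, heM, vecMul_vecMulVec, hev, one_smul, sub_self]
  have hadj : (1 - vecMulVec e (star v))ᴴ = 1 - vecMulVec v e := by
    rw [conjTranspose_sub, conjTranspose_one, conjTranspose_vecMulVec, star_star,
      show star e = e by simp [e]]
  have hconj : (1 - vecMulVec e (star v))ᴴ * M * (1 - vecMulVec e (star v)) =
      M - vecMulVec v (star v) := by
    rw [Matrix.mul_assoc, hright, hadj, Matrix.sub_mul, Matrix.one_mul, vecMulVec_mul, hleft,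
      vecMulVec_zero, sub_zero]
  exact hconj ▸ hM.conjTranspose_mul_mul_same _

open scoped ComplexOrder in
theorem eq_vecMulVec_col_of_trace_le {ι 𝕜 : Type*} [Fintype ι] [RCLike 𝕜] {M : Matrix ι ι 𝕜}
    (hM : M.PosSemidef) {o : ι} (ho : M o o = 1)
    (htrace : M.trace ≤ (vecMulVec (M.col o) (star (M.col o))).trace) :
    M = vecMulVec (M.col o) (star (M.col o)) := by
  have hschur := posSemidef_sub_vecMulVec_col hM ho
  refine sub_eq_zero.1 (hschur.trace_eq_zero_iff.1 (le_antisymm ?_ hschur.trace_nonneg))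
  rw [trace_sub]
  exact sub_nonpos.2 htrace

theorem rank_vecMulVec_of_ne_zero {ι κ K : Type*} [Fintype κ] [CommRing K] [IsDomain K]
    {v : ι → K} {w : κ → K} (hv : v ≠ 0) (hw : w ≠ 0) : (vecMulVec v w).rank = 1 := by
  classical
  obtain ⟨i, hi⟩ := Function.ne_iff.1 hv
  obtain ⟨j, hj⟩ := Function.ne_iff.1 hw
  refine le_antisymm (rank_vecMulVec_le v w) (Nat.one_le_iff_ne_zero.2 fun h => ?_)
  rw [rank, Submodule.finrank_eq_zero, LinearMap.range_eq_bot] at h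
  have hzero : vecMulVec v w = 0 := toLin'.map_eq_zero_iff.1 h
  exact mul_ne_zero hi hj (congrFun (congrFun hzero i) j)

end MatrixLemmas

section MixedStrategies

variable {ι R : Type*} [Fintype ι] [Ring R] [PartialOrder R] [IsOrderedRing R] {w g : ι → R}

theorem dotProduct_le_of_mem_stdSimplex (hw : w ∈ stdSimplex R ι) {s : R} (hg : ∀ i, g i ≤ s) :
    w ⬝ᵥ g ≤ s := by
  calc w ⬝ᵥ g ≤ ∑ i, w i * s :=
        Finset.sum_le_sum fun i _ => mul_le_mul_of_nonneg_left (hg i) (hw.1 i)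
    _ = s := by rw [← Finset.sum_mul, hw.2, one_mul]

theorem mul_le_mul_of_forall_le_dotProduct (hw : w ∈ stdSimplex R ι) (hg : ∀ i, g i ≤ w ⬝ᵥ g)
    (i k : ι) : w i * g k ≤ w i * g i := by
  have hgap : ∀ i, 0 ≤ w i * (w ⬝ᵥ g - g i) := fun i =>
    mul_nonneg (hw.1 i) (sub_nonneg.2 (hg i))
  have hsum : ∑ i, w i * (w ⬝ᵥ g - g i) = 0 := by
    simp only [mul_sub, Finset.sum_sub_distrib, ← Finset.sum_mul, hw.2, one_mul]
    exact sub_self _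
  have hslack : w i * (w ⬝ᵥ g - g i) = 0 :=
    (Finset.sum_eq_zero_iff_of_nonneg fun i _ => hgap i).1 hsum i (Finset.mem_univ i)
  calc w i * g k ≤ w i * (w ⬝ᵥ g) := mul_le_mul_of_nonneg_left (hg k) (hw.1 i)
    _ = w i * g i := sub_eq_zero.1 (by rw [← mul_sub, hslack])

end MixedStrategies

section Nash

variable {A B : Matrix (Fin m) (Fin n) ℝ} {x : Fin m → ℝ} {y : Fin n → ℝ}

theorem isNash_iff : IsNash A B x y ↔ InSimplex x ∧ InSimplex y ∧
    (∀ i, (A *ᵥ y) i ≤ x ⬝ᵥ A *ᵥ y) ∧ ∀ j, (x ᵥ* B) j ≤ y ⬝ᵥ x ᵥ* B := by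
  have hpayoff : ∀ C : Matrix (Fin m) (Fin n) ℝ,
      ∑ i, ∑ j, x i * C i j * y j = x ⬝ᵥ C *ᵥ y := fun C => by
    simp only [dotProduct, mulVec, Finset.mul_sum, mul_assoc]
  have hcol : ∀ j, ∑ i, B i j * x i = (x ᵥ* B) j := fun j => dotProduct_comm _ x
  simp only [IsNash, hpayoff, hcol, ge_iff_le, dotProduct_comm y, ← dotProduct_mulVec]
  rfl

theorem trace_allOnesM_mul (Z : Matrix (Fin n) (Fin m) ℝ) :
    (allOnesM m n * Z).trace = ∑ j, ∑ i, Z j i := by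
  simp only [trace, diag_apply, mul_apply, allOnesM, of_apply, one_mul]
  exact Finset.sum_comm

theorem mul_trace_add_mul_trace_eq {c e r : ℝ} (hAB : c • A + e • B = r • allOnesM m n)
    {Z : Matrix (Fin n) (Fin m) ℝ} (hZ : ∑ j, ∑ i, Z j i = 1) :
    c * (A * Z).trace + e * (B * Z).trace = r := by
  have := congrArg (fun C => (C * Z).trace) hAB
  simpa [Matrix.add_mul, trace_allOnesM_mul, hZ] using this

theorem mul_dotProduct_add_mul_dotProduct_eq {c e r : ℝ}
    (hAB : c • A + e • B = r • allOnesM m n) (hx : ∑ i, x i = 1) (hy : ∑ j, y j = 1) :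
    c * (x ⬝ᵥ A *ᵥ y) + e * (y ⬝ᵥ x ᵥ* B) = r := by
  have hprod : ∑ j, ∑ i, vecMulVec y x j i = 1 := by
    simp only [vecMulVec_apply, ← Finset.mul_sum, hx, mul_one, hy]
  have htrace : ∀ C : Matrix (Fin m) (Fin n) ℝ, (C * vecMulVec y x).trace = x ⬝ᵥ C *ᵥ y :=
    fun C => by rw [mul_vecMulVec, trace_vecMulVec, dotProduct_comm]
  rw [dotProduct_comm y, ← dotProduct_mulVec, ← htrace, ← htrace]
  exact mul_trace_add_mul_trace_eq hAB hprod

theorem isNash_of_forall_le_trace (hx : InSimplex x) (hy : InSimplex y) {c e r : ℝ} (hc : 0 < c)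
    (he : 0 < e) (hAB : c • A + e • B = r • allOnesM m n) {Z : Matrix (Fin n) (Fin m) ℝ}
    (hZ : ∑ j, ∑ i, Z j i = 1) (hA : ∀ i, (A *ᵥ y) i ≤ (A * Z).trace)
    (hB : ∀ j, (x ᵥ* B) j ≤ (B * Z).trace) : IsNash A B x y := by
  have hsum : c * (x ⬝ᵥ A *ᵥ y) + e * (y ⬝ᵥ x ᵥ* B) = c * (A * Z).trace + e * (B * Z).trace :=
    (mul_dotProduct_add_mul_dotProduct_eq hAB hx.2 hy.2).trans
      (mul_trace_add_mul_trace_eq hAB hZ).symm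
  have hAle := mul_le_mul_of_nonneg_left (dotProduct_le_of_mem_stdSimplex hx hA) hc.le
  have hBle := mul_le_mul_of_nonneg_left (dotProduct_le_of_mem_stdSimplex hy hB) he.le
  have hAge : (A * Z).trace ≤ x ⬝ᵥ A *ᵥ y := le_of_mul_le_mul_left (by linarith) hc
  have hBge : (B * Z).trace ≤ y ⬝ᵥ x ᵥ* B := le_of_mul_le_mul_left (by linarith) he
  exact isNash_iff.2 ⟨hx, hy, fun i => (hA i).trans hAge, fun j => (hB j).trans hBge⟩

theorem SDP1Feasible.isNash {M : Matrix (SDPIdx m n) (SDPIdx m n) ℝ} (hM : SDP1Feasible A B M)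
    {c e r : ℝ} (hc : 0 < c) (he : 0 < e) (hAB : c • A + e • B = r • allOnesM m n)
    (hZ : ∑ j, ∑ i, blkZ M j i = 1) : IsNash A B (lastX M) (lastY M) := by
  obtain ⟨-, hnonneg, -, hx, hy, hA, hB⟩ := hM
  refine isNash_of_forall_le_trace (Z := of (blkZ M)) ⟨fun i => hnonneg _ _, hx⟩
    ⟨fun j => hnonneg _ _, hy⟩ hc he hAB hZ hA fun j => ?_
  exact (dotProduct_comm _ _).trans_le (hB j)

end Nash

section Lift

/-- The vector `(x, y, 1)`, indexed like the SDP matrix, that encodes the strategy pair `(x, y)`. -/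
def liftVec (x : Fin m → ℝ) (y : Fin n → ℝ) : SDPIdx m n → ℝ :=
  Sum.elim (Sum.elim x y) 1

/-- The rank-one SDP matrix `v vᵀ`, where `v = (x, y, 1)`, of the strategy pair `(x, y)`. -/
def rankOneLift (x : Fin m → ℝ) (y : Fin n → ℝ) : Matrix (SDPIdx m n) (SDPIdx m n) ℝ :=
  vecMulVec (liftVec x y) (liftVec x y)

variable {A B : Matrix (Fin m) (Fin n) ℝ} {x : Fin m → ℝ} {y : Fin n → ℝ}

theorem lastX_rankOneLift : lastX (rankOneLift x y) = x :=
  funext fun i => mul_one (x i)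

theorem lastY_rankOneLift : lastY (rankOneLift x y) = y :=
  funext fun j => mul_one (y j)

theorem blkP_rankOneLift (i : Fin m) (j : Fin n) : blkP (rankOneLift x y) i j = x i * y j :=
  rfl

theorem blkZ_rankOneLift (j : Fin n) (i : Fin m) : blkZ (rankOneLift x y) j i = y j * x i :=
  rfl

theorem rank_rankOneLift : (rankOneLift x y).rank = 1 := by
  have hne : liftVec x y ≠ 0 := fun h => one_ne_zero (congrFun h (Sum.inr ()))
  exact rank_vecMulVec_of_ne_zero hne hne

theorem liftVec_nonneg (hx : 0 ≤ x) (hy : 0 ≤ y) : 0 ≤ liftVec x y := by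
  rintro ((i | j) | _)
  exacts [hx i, hy j, zero_le_one]

theorem sdp1Feasible_rankOneLift (h : IsNash A B x y) : SDP1Feasible A B (rankOneLift x y) := by
  obtain ⟨hx, hy, hA, hB⟩ := h
  have hv := liftVec_nonneg hx.1 hy.1
  refine ⟨posSemidef_vecMulVec_self_star (liftVec x y), fun a b => mul_nonneg (hv a) (hv b),
    mul_one 1, ?_, ?_, fun i => ?_, fun j => ?_⟩
  · simpa only [lastX_rankOneLift] using hx.2
  · simpa only [lastY_rankOneLift] using hy.2
  · simpa only [lastY_rankOneLift, blkZ_rankOneLift, mul_left_comm, mul_comm] using hA i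
  · simpa only [lastX_rankOneLift, blkZ_rankOneLift, mul_left_comm, mul_comm] using hB j

theorem sdp2Feasible_rankOneLift (h : IsNash A B x y) : SDP2Feasible A B (rankOneLift x y) := by
  obtain ⟨hx, hy, hA, hB⟩ := isNash_iff.1 h
  refine ⟨sdp1Feasible_rankOneLift h, fun i => ?_, fun i => ?_, fun j => ?_, fun j => ?_,
    fun i k => ?_, fun j k => ?_⟩
  · exact (Finset.mul_sum ..).symm.trans (congrArg (x i * ·) hx.2)
  · exact (Finset.mul_sum ..).symm.trans (congrArg (x i * ·) hy.2)
  · exact (Finset.mul_sum ..).symm.trans (congrArg (y j * ·) hy.2)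
  · exact (Finset.mul_sum ..).symm.trans (congrArg (y j * ·) hx.2)
  · have hslack := mul_le_mul_of_forall_le_dotProduct hx hA i k
    simpa only [blkP_rankOneLift, mulVec, dotProduct, Finset.mul_sum, mul_left_comm] using hslack
  · have hslack := mul_le_mul_of_forall_le_dotProduct hy hB j k
    simpa only [blkP_rankOneLift, vecMul, dotProduct, Finset.mul_sum, mul_left_comm, mul_comm]
      using hslack

theorem liftVec_lastX_lastY {M : Matrix (SDPIdx m n) (SDPIdx m n) ℝ}
    (hcorner : M (Sum.inr ()) (Sum.inr ()) = 1) :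
    liftVec (lastX M) (lastY M) = M.col (Sum.inr ()) := by
  ext ((i | j) | _)
  exacts [rfl, rfl, hcorner.symm]

theorem trace_eq_trace_upperBlock_add (M : Matrix (SDPIdx m n) (SDPIdx m n) ℝ) :
    M.trace = (upperBlock M).trace + M (Sum.inr ()) (Sum.inr ()) := by
  simp [trace, upperBlock]

theorem eq_rankOneLift_of_trace_upperBlock_le {M : Matrix (SDPIdx m n) (SDPIdx m n) ℝ}
    (hM : M.PosSemidef) (hcorner : M (Sum.inr ()) (Sum.inr ()) = 1)
    (htrace : (upperBlock M).trace ≤ (upperBlock (rankOneLift (lastX M) (lastY M))).trace) :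
    M = rankOneLift (lastX M) (lastY M) := by
  have hle : M.trace ≤ (rankOneLift (lastX M) (lastY M)).trace := by
    have hlift : rankOneLift (lastX M) (lastY M) (Sum.inr ()) (Sum.inr ()) = 1 := mul_one 1
    rw [trace_eq_trace_upperBlock_add, trace_eq_trace_upperBlock_add (rankOneLift _ _), hcorner,
      hlift]
    exact add_le_add_left htrace 1
  rw [rankOneLift, liftVec_lastX_lastY hcorner] at hle ⊢
  exact eq_vecMulVec_col_of_trace_le hM hcorner hle

end Lift

theorem stmt17_general (A B : Matrix (Fin m) (Fin n) ℝ) (c d e f : ℝ) (hc : 0 < c) (he : 0 < e)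
    (hsc : c • A + d • allOnesM m n = -(e • B) + f • allOnesM m n)
    (M : Matrix (SDPIdx m n) (SDPIdx m n) ℝ) (hM : SDP1Feasible A B M)
    (hZ : ∑ j, ∑ i, blkZ M j i = 1)
    (hmin : ∀ N : Matrix (SDPIdx m n) (SDPIdx m n) ℝ,
      SDP2Feasible A B N → (upperBlock M).trace ≤ (upperBlock N).trace) :
    M.rank = 1 := by
  have hAB : c • A + e • B = (f - d) • allOnesM m n := by
    rw [sub_smul, eq_sub_iff_add_eq, add_right_comm, hsc]
    abel
  have hnash : IsNash A B (lastX M) (lastY M) := hM.isNash hc he hAB hZ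
  have hlift : M = rankOneLift (lastX M) (lastY M) :=
    eq_rankOneLift_of_trace_upperBlock_le hM.1 hM.2.2.1 (hmin _ (sdp2Feasible_rankOneLift hnash))
  rw [hlift]
  exact rank_rankOneLift

/-- for a strictly competitive game, any SDP2-feasible solution minimizing the
trace of the upper-left block among all SDP2-feasible solutions has rank 1. -/
theorem stmt17 (A B : Matrix (Fin m) (Fin n) ℝ) (c d e f : ℝ) (hc : 0 < c) (he : 0 < e)
    (hsc : c • A + d • allOnesM m n = -(e • B) + f • allOnesM m n)
    (M : Matrix (SDPIdx m n) (SDPIdx m n) ℝ)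
    (hfeas : SDP2Feasible A B M)
    (hmin : ∀ N : Matrix (SDPIdx m n) (SDPIdx m n) ℝ,
      SDP2Feasible A B N → (upperBlock M).trace ≤ (upperBlock N).trace) :
    M.rank = 1 := by
  have hZ : ∑ j, ∑ i, blkZ M j i = 1 := by simp only [hfeas.2.2.2.2.1, hfeas.1.2.2.2.2.1]
  exact stmt17_general A B c d e f hc he hsc M hfeas.1 hZ hmin
end

section
/- Let A, B be m×n real matrices and let M' be an SDP2-feasible solution for the game (A,B), with diagonal blocks X, Y and last-column vectors x, y. Then M' has rank 1 if and only if X_{ii} = x_i^2 for all i ∈ {1,…,m} and Y_{ii} = y_i^2 for all i ∈ {1,…,n}. -/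
open Matrix BigOperators

variable {m n : ℕ}

section Rank

variable {ι κ : Type*} [Fintype κ]

theorem card_le_rank_of_det_submatrix_ne_zero {R μ : Type*} [CommRing R] [IsDomain R]
    [Fintype μ] [DecidableEq μ] (M : Matrix ι κ R) (r : μ → ι) (s : μ → κ)
    (h : (M.submatrix r s).det ≠ 0) : Fintype.card μ ≤ M.rank :=
  calc Fintype.card μ = (M.submatrix r s).rank := (rank_of_det_ne_zero h).symm
    _ ≤ M.rank := rank_submatrix_le M r s

theorem rank_pos_of_apply_ne_zero {R : Type*} [CommRing R] [IsDomain R] {M : Matrix ι κ R}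
    {i : ι} {j : κ} (h : M i j ≠ 0) : 0 < M.rank := by
  have hdet : (M.submatrix (fun _ : Unit => i) (fun _ : Unit => j)).det ≠ 0 := by
    rwa [det_unique]
  exact card_le_rank_of_det_submatrix_ne_zero M _ _ hdet

theorem mul_eq_mul_of_rank_le_one {R : Type*} [CommRing R] [IsDomain R] {M : Matrix ι κ R}
    (h : M.rank ≤ 1) (i k : ι) (j l : κ) : M i j * M k l = M i l * M k j := by
  by_contra hne
  have hdet : (M.submatrix ![i, k] ![j, l]).det ≠ 0 := by
    rw [det_fin_two]
    exact sub_ne_zero.2 hne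
  have htwo : 2 ≤ M.rank := by
    simpa using card_le_rank_of_det_submatrix_ne_zero M _ _ hdet
  omega

theorem rank_eq_one_iff_of_apply_ne_zero {K : Type*} [Field K] {M : Matrix ι κ K}
    {k : ι} {l : κ} (hkl : M k l ≠ 0) :
    M.rank = 1 ↔ ∀ i j, M i j * M k l = M i l * M k j := by
  refine ⟨fun h i j => mul_eq_mul_of_rank_le_one h.le i k j l, fun h => ?_⟩
  have hM : M = vecMulVec (fun i => M i l) (fun j => M k j / M k l) := by
    ext i j
    rw [vecMulVec_apply, ← mul_div_assoc, eq_div_iff hkl, h]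
  have hle : M.rank ≤ 1 := hM ▸ rank_vecMulVec_le _ _
  exact le_antisymm hle (rank_pos_of_apply_ne_zero hkl)

end Rank

section PosSemidef

open scoped ComplexOrder

variable {ι 𝕜 : Type*} [RCLike 𝕜] {M : Matrix ι ι 𝕜}

theorem mul_apply_swap_eq_norm_sq_of_isHermitian (hM : M.IsHermitian) (i k : ι) :
    M i k * M k i = (‖M i k‖ : 𝕜) ^ 2 := by
  rw [← hM.apply k i, ← RCLike.mul_conj, starRingEnd_apply]

theorem mul_eq_mul_of_posSemidef_of_principal_minor_eq_zero (hM : M.PosSemidef) {i k : ι}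
    (h : M i i * M k k = M i k * M k i) (j : ι) : M j i * M k k = M j k * M k i := by
  -- `v* N v` is `M k k` times the principal minor on `{i, k}`, so `v` lies in the kernel of `N`.
  let N : Matrix (Fin 3) (Fin 3) 𝕜 := M.submatrix ![i, k, j] ![i, k, j]
  let v : Fin 3 → 𝕜 := ![M k k, -M k i, 0]
  have hNv : N *ᵥ v = ![0, 0, M j i * M k k - M j k * M k i] := by
    ext l
    rw [mulVec, dotProduct, Fin.sum_univ_three]
    fin_cases l
    · change M i i * M k k + M i k * -M k i + M i j * 0 = 0
      linear_combination h
    · change M k i * M k k + M k k * -M k i + M k j * 0 = 0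
      ring
    · change M j i * M k k + M j k * -M k i + M j j * 0 = M j i * M k k - M j k * M k i
      ring
  have hquad : star v ⬝ᵥ N *ᵥ v = 0 := by
    rw [hNv]
    simp [v, dotProduct, Fin.sum_univ_three]
  have hker : N *ᵥ v = 0 := ((hM.submatrix ![i, k, j]).dotProduct_mulVec_zero_iff v).1 hquad
  exact sub_eq_zero.1 (congrFun (hNv.symm.trans hker) 2)

theorem stmt18_general [Fintype ι] (hM : M.PosSemidef) {k : ι} (hk : M k k ≠ 0) :
    M.rank = 1 ↔ ∀ i, M i i * M k k = (‖M i k‖ : 𝕜) ^ 2 := by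
  simp_rw [rank_eq_one_iff_of_apply_ne_zero hk,
    ← mul_apply_swap_eq_norm_sq_of_isHermitian hM.isHermitian]
  exact ⟨fun h i => h i i,
    fun h j i => mul_eq_mul_of_posSemidef_of_principal_minor_eq_zero hM (h i) j⟩

end PosSemidef

/-- an SDP2-feasible solution has rank 1 iff `X_{ii} = x_i²` and
`Y_{ii} = y_i²` for all `i`. -/
theorem stmt18 (A B : Matrix (Fin m) (Fin n) ℝ)
    (M : Matrix (SDPIdx m n) (SDPIdx m n) ℝ)
    (hfeas : SDP2Feasible A B M) :
    M.rank = 1 ↔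
      ((∀ i : Fin m, blkX M i i = (lastX M i) ^ 2) ∧
       (∀ j : Fin n, blkY M j j = (lastY M j) ^ 2)) := by
  obtain ⟨⟨hM, -, hcorner, -⟩, -⟩ := hfeas
  simpa [Sum.forall, hcorner, blkX, blkY, lastX, lastY] using
    stmt18_general hM (k := Sum.inr ()) (by simp [hcorner])
end

section
/- Let A, B be m×n real matrices all of whose entries lie in [0,1], and let M' be an SDP2-feasible solution for the game (A,B) with upper-left (m+n)×(m+n) block M and last-column vectors x, y. Then ε(x,y) ≤ (3(m+n)/8) · (Tr(M) − x^T x − y^T y). -/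
open Matrix BigOperators

variable {m n : ℕ}

/-!
Write `z = (x, y)`. Since the corner entry of the positive semidefinite matrix `M'` is `1`, its
Schur complement `K = M - z zᵀ` is positive semidefinite, and `Tr K = Tr M - xᵀx - yᵀy`. The relaxed
Nash constraints bound `ε_A(x, y)` by `Tr(AZ) - xᵀAy = Tr(A (Z - y xᵀ))`, where `Z - y xᵀ` is the
lower-left block of `K`, and `ε_B(x, y)` likewise. The `2 × 2` minors `K_{ji}² ≤ K_{ii} K_{jj}`,
Cauchy–Schwarz and `|A_{ij}| ≤ 1` give
`Tr(A (Z - y xᵀ))² ≤ m n Tr(K₁₁) Tr(K₂₂) ≤ ((m + n)/4 · Tr K)²`.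
-/

section PosSemidef

variable {ι κ : Type*}

theorem posSemidef_sq_apply_le_mul_diag {K : Matrix ι ι ℝ} (hK : K.PosSemidef) (i j : ι) :
    K i j ^ 2 ≤ K i i * K j j := by
  have hminor : 0 ≤ (K.submatrix ![i, j] ![i, j]).det := (hK.submatrix _).det_nonneg
  have hsymm : K j i = K i j := hK.isHermitian.apply i j
  simp only [det_fin_two, submatrix_apply, cons_val_zero, cons_val_one, hsymm] at hminor
  linarith

theorem posSemidef_toBlocks₁₁_sub_mul_transpose [Finite ι] [Fintype κ] [DecidableEq κ]
    {M : Matrix (ι ⊕ κ) (ι ⊕ κ) ℝ} (hM : M.PosSemidef) (hcorner : M.toBlocks₂₂ = 1) :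
    (M.toBlocks₁₁ - M.toBlocks₁₂ * M.toBlocks₁₂ᵀ).PosSemidef := by
  have hblocks : M = fromBlocks M.toBlocks₁₁ M.toBlocks₁₂ M.toBlocks₁₂ᴴ 1 := by
    have hsymm : M.toBlocks₂₁ = M.toBlocks₁₂ᴴ := by
      ext i j
      exact (hM.isHermitian.apply (Sum.inr i) (Sum.inl j)).symm
    rw [← hsymm, ← hcorner, fromBlocks_toBlocks]
  let : Invertible (1 : Matrix κ κ ℝ) := invertibleOne
  rw [hblocks, PosDef.fromBlocks₂₂ _ _ .one] at hM
  simpa only [inv_one, Matrix.mul_one, conjTranspose_eq_transpose_of_trivial] using hM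

variable [Fintype ι] [Fintype κ]

theorem sq_trace_mul_toBlocks₂₁_le {K : Matrix (ι ⊕ κ) (ι ⊕ κ) ℝ} (hK : K.PosSemidef)
    (C : Matrix ι κ ℝ) :
    (C * K.toBlocks₂₁).trace ^ 2 ≤
      (∑ i, ∑ j, C i j ^ 2) * (K.toBlocks₁₁.trace * K.toBlocks₂₂.trace) := by
  have hentries : ∑ i, ∑ j, K.toBlocks₂₁ j i ^ 2 ≤ K.toBlocks₁₁.trace * K.toBlocks₂₂.trace := by
    simp only [trace, diag_apply, Finset.sum_mul_sum]
    gcongr with i _ j _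
    exact (posSemidef_sq_apply_le_mul_diag hK (Sum.inr j) (Sum.inl i)).trans_eq (mul_comm _ _)
  calc (C * K.toBlocks₂₁).trace ^ 2
      = (∑ p : ι × κ, C p.1 p.2 * K.toBlocks₂₁ p.2 p.1) ^ 2 := by
        simp only [trace, diag_apply, mul_apply, Fintype.sum_prod_type]
    _ ≤ (∑ p : ι × κ, C p.1 p.2 ^ 2) * ∑ p : ι × κ, K.toBlocks₂₁ p.2 p.1 ^ 2 :=
        Finset.sum_mul_sq_le_sq_mul_sq _ _ _
    _ = (∑ i, ∑ j, C i j ^ 2) * ∑ i, ∑ j, K.toBlocks₂₁ j i ^ 2 := by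
        simp only [Fintype.sum_prod_type]
    _ ≤ (∑ i, ∑ j, C i j ^ 2) * (K.toBlocks₁₁.trace * K.toBlocks₂₂.trace) := by gcongr

theorem sum_sq_le_card_mul_card {C : Matrix ι κ ℝ} (hC : ∀ i j, |C i j| ≤ 1) :
    ∑ i, ∑ j, C i j ^ 2 ≤ Fintype.card ι * Fintype.card κ :=
  calc ∑ i, ∑ j, C i j ^ 2
      ≤ ∑ _i : ι, ∑ _j : κ, (1 : ℝ) := by
        gcongr with i _ j _
        exact (sq_le_one_iff_abs_le_one _).2 (hC i j)
    _ = Fintype.card ι * Fintype.card κ := by simp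

theorem trace_mul_toBlocks₂₁_le {K : Matrix (ι ⊕ κ) (ι ⊕ κ) ℝ} (hK : K.PosSemidef)
    {C : Matrix ι κ ℝ} (hC : ∀ i j, |C i j| ≤ 1) :
    (C * K.toBlocks₂₁).trace ≤ (Fintype.card ι + Fintype.card κ) / 4 * K.trace := by
  set p := K.toBlocks₁₁.trace
  set q := K.toBlocks₂₂.trace
  have hp : 0 ≤ p := (hK.submatrix Sum.inl).trace_nonneg
  have hq : 0 ≤ q := (hK.submatrix Sum.inr).trace_nonneg
  have htrace : K.trace = p + q := Fintype.sum_sum_type _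
  refine le_of_sq_le_sq ?_ (mul_nonneg (by positivity) hK.trace_nonneg)
  calc (C * K.toBlocks₂₁).trace ^ 2
      ≤ (∑ i, ∑ j, C i j ^ 2) * (p * q) := sq_trace_mul_toBlocks₂₁_le hK C
    _ ≤ (Fintype.card ι * Fintype.card κ) * (p * q) := by
        gcongr
        exact sum_sq_le_card_mul_card hC
    _ = (4 * Fintype.card ι * Fintype.card κ) * (4 * p * q) / 16 := by ring
    _ ≤ (Fintype.card ι + Fintype.card κ) ^ 2 * (p + q) ^ 2 / 16 := by
        gcongr <;> exact four_mul_le_sq_add _ _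
    _ = ((Fintype.card ι + Fintype.card κ) / 4 * K.trace) ^ 2 := by rw [htrace]; ring

end PosSemidef

/-- The covariance matrix `M - z zᵀ` with `z = (x, y)` of an SDP matrix: the Schur complement of its
corner entry when that entry is `1`. The last column alone is used, so that no symmetry of the
matrix enters the definition. -/
def sdpCovariance (M : Matrix (SDPIdx m n) (SDPIdx m n) ℝ) :
    Matrix (Fin m ⊕ Fin n) (Fin m ⊕ Fin n) ℝ :=
  M.toBlocks₁₁ - M.toBlocks₁₂ * M.toBlocks₁₂ᵀ

theorem sdpCovariance_apply (M : Matrix (SDPIdx m n) (SDPIdx m n) ℝ) (a b : Fin m ⊕ Fin n) :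
    sdpCovariance M a b =
      upperBlock M a b - M (Sum.inl a) (Sum.inr ()) * M (Sum.inl b) (Sum.inr ()) := by
  simp [sdpCovariance, upperBlock, mul_apply, toBlocks₁₁, toBlocks₁₂]

theorem posSemidef_sdpCovariance {M : Matrix (SDPIdx m n) (SDPIdx m n) ℝ} (hM : M.PosSemidef)
    (hcorner : M (Sum.inr ()) (Sum.inr ()) = 1) : (sdpCovariance M).PosSemidef :=
  posSemidef_toBlocks₁₁_sub_mul_transpose hM <| by
    ext
    simpa [toBlocks₂₂] using hcorner

theorem trace_sdpCovariance (M : Matrix (SDPIdx m n) (SDPIdx m n) ℝ) :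
    (sdpCovariance M).trace =
      (upperBlock M).trace - (∑ i, lastX M i ^ 2) - ∑ j, lastY M j ^ 2 := by
  simp only [trace, diag_apply, sdpCovariance_apply, Finset.sum_sub_distrib, ← sq,
    Fintype.sum_sum_type, lastX, lastY]
  ring

theorem trace_mul_sdpCovariance_toBlocks₂₁ (C : Matrix (Fin m) (Fin n) ℝ)
    (M : Matrix (SDPIdx m n) (SDPIdx m n) ℝ) :
    (C * (sdpCovariance M).toBlocks₂₁).trace =
      ∑ i, ∑ j, C i j * blkZ M j i - ∑ i, ∑ j, lastX M i * C i j * lastY M j := by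
  simp only [trace, diag_apply, mul_apply, toBlocks₂₁, of_apply, sdpCovariance_apply,
    ← Finset.sum_sub_distrib, upperBlock, blkZ, lastX, lastY]
  refine Finset.sum_congr rfl fun i _ => Finset.sum_congr rfl fun j _ => ?_
  ring

theorem sum_mul_blkZ_sub_le {C : Matrix (Fin m) (Fin n) ℝ} (hC : ∀ i j, |C i j| ≤ 1)
    {M : Matrix (SDPIdx m n) (SDPIdx m n) ℝ} (hM : M.PosSemidef)
    (hcorner : M (Sum.inr ()) (Sum.inr ()) = 1) :
    ∑ i, ∑ j, C i j * blkZ M j i - ∑ i, ∑ j, lastX M i * C i j * lastY M j ≤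
      (m + n : ℝ) / 4 *
        ((upperBlock M).trace - (∑ i, lastX M i ^ 2) - ∑ j, lastY M j ^ 2) := by
  rw [← trace_mul_sdpCovariance_toBlocks₂₁, ← trace_sdpCovariance]
  simpa only [Fintype.card_fin] using
    trace_mul_toBlocks₂₁_le (posSemidef_sdpCovariance hM hcorner) hC

theorem trace_upperBlock_sub_sum_sq_nonneg {M : Matrix (SDPIdx m n) (SDPIdx m n) ℝ}
    (hM : M.PosSemidef) (hcorner : M (Sum.inr ()) (Sum.inr ()) = 1) :
    0 ≤ (upperBlock M).trace - (∑ i, lastX M i ^ 2) - ∑ j, lastY M j ^ 2 :=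
  trace_sdpCovariance M ▸ (posSemidef_sdpCovariance hM hcorner).trace_nonneg

theorem abs_le_one_of_mem_Icc_zero_one {a : ℝ} (ha : a ∈ Set.Icc 0 1) : |a| ≤ 1 :=
  (abs_of_nonneg ha.1).trans_le ha.2

theorem nonempty_of_sum_eq_one {ι : Type*} [Fintype ι] {v : ι → ℝ} (hv : ∑ i, v i = 1) :
    Nonempty ι :=
  (Finset.nonempty_of_sum_ne_zero (hv.trans_ne one_ne_zero)).to_type

theorem stmt19_general (A B : Matrix (Fin m) (Fin n) ℝ)
    (hA : ∀ i j, |A i j| ≤ 1) (hB : ∀ i j, |B i j| ≤ 1)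
    (M : Matrix (SDPIdx m n) (SDPIdx m n) ℝ) (hfeas : SDP1Feasible A B M) :
    epsNE A B (lastX M) (lastY M) ≤
      (m + n : ℝ) / 4 *
        ((upperBlock M).trace - (∑ i, lastX M i ^ 2) - ∑ j, lastY M j ^ 2) := by
  obtain ⟨hM, -, hcorner, hx, hy, hNashA, hNashB⟩ := hfeas
  have := nonempty_of_sum_eq_one hx
  have := nonempty_of_sum_eq_one hy
  refine max_le ?_ ?_
  · exact (sub_le_sub_right (ciSup_le hNashA) _).trans (sum_mul_blkZ_sub_le hA hM hcorner)
  · exact (sub_le_sub_right (ciSup_le hNashB) _).trans (sum_mul_blkZ_sub_le hB hM hcorner)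

/-- `ε(x,y) ≤ (3(m+n)/8)·(Tr(M) − xᵀx − yᵀy)` for any SDP2-feasible solution
of a game with payoffs in `[0,1]`. -/
theorem stmt19 (hm : 0 < m) (hn : 0 < n) (A B : Matrix (Fin m) (Fin n) ℝ)
    (hA : ∀ i j, A i j ∈ Set.Icc (0 : ℝ) 1) (hB : ∀ i j, B i j ∈ Set.Icc (0 : ℝ) 1)
    (M : Matrix (SDPIdx m n) (SDPIdx m n) ℝ)
    (hfeas : SDP2Feasible A B M) :
    epsNE A B (lastX M) (lastY M) ≤
      (3 * (m + n : ℝ) / 8) *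
        ((upperBlock M).trace - (∑ i, (lastX M i) ^ 2) - ∑ j, (lastY M j) ^ 2) := by
  have hcoeff : (m + n : ℝ) / 4 ≤ 3 * (m + n : ℝ) / 8 := by
    linarith [m.cast_nonneg (α := ℝ), n.cast_nonneg (α := ℝ)]
  exact (stmt19_general A B (fun i j => abs_le_one_of_mem_Icc_zero_one (hA i j))
    (fun i j => abs_le_one_of_mem_Icc_zero_one (hB i j)) M hfeas.1).trans <|
    mul_le_mul_of_nonneg_right hcoeff (trace_upperBlock_sub_sum_sq_nonneg hfeas.1.1 hfeas.1.2.2.1)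
end
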